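/- For all indices i, j ∈ {1,2,3}, the components of the Laplace–Runge–Lenz vector satisfy the Poisson bracket relation {A_i, A_j}(r,v) = −2 E(r,v) Σ_k ε_{ijk} L_k(r,v) for all (r,v) with r ≠ 0. -/

import Mathlib

/-!
Writing `e_i` for the standard basis, `v × (r × v) = ‖v‖² r - ⟪r, v⟫ v` gives
`A_i = ‖v‖² r_i - ⟪r, v⟫ v_i - κ r_i / ‖r‖` (`lrl_apply`), hence for `r ≠ 0`
* `∇_r A_i = (‖v‖² - κ / ‖r‖) e_i - v_i v + (κ r_i / ‖r‖³) r` (`gradR_lrl`),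
* `∇_v A_i = 2 r_i v - v_i r - ⟪r, v⟫ e_i` (`gradV_lrl`).

In the bracket every term symmetric in `i, j` cancels, and what remains is
`-(‖v‖² - 2 κ / ‖r‖) (r_i v_j - r_j v_i)`. The first factor is `2 E`, and the second is
`∑ k, ε_{ijk} L_k` (`sum_eps_angMom`).
-/

noncomputable section

/-- Physical 3-space. -/
abbrev E3 : Type := EuclideanSpace ℝ (Fin 3)

/-- Build a vector in `E3` from its components. -/
def toE3 (f : Fin 3 → ℝ) : E3 := (EuclideanSpace.equiv (Fin 3) ℝ).symm f

/-- Cross product in `ℝ³`. -/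
def cross (a b : E3) : E3 :=
  toE3 ![a 1 * b 2 - a 2 * b 1, a 2 * b 0 - a 0 * b 2, a 0 * b 1 - a 1 * b 0]

/-- Dot product in `ℝ³`. -/
def dot (a b : E3) : ℝ := ∑ i, a i * b i

/-- Gradient in the `r` variable of a function on phase space. -/
def gradR (F : E3 × E3 → ℝ) (p : E3 × E3) : E3 := gradient (fun x => F (x, p.2)) p.1

/-- Gradient in the `v` variable of a function on phase space. -/
def gradV (F : E3 × E3 → ℝ) (p : E3 × E3) : E3 := gradient (fun y => F (p.1, y)) p.2

/-- Poisson bracket of two functions on phase space. -/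
def pb (F G : E3 × E3 → ℝ) (p : E3 × E3) : ℝ :=
  dot (gradR F p) (gradV G p) - dot (gradR G p) (gradV F p)

/-- Energy `E(r,v) = (1/2)‖v‖² − κ/‖r‖`. -/
def energy (κ : ℝ) (p : E3 × E3) : ℝ := (1/2) * ‖p.2‖^2 - κ / ‖p.1‖

/-- Angular momentum `L(r,v) = r × v`. -/
def angMom (p : E3 × E3) : E3 := cross p.1 p.2

/-- Laplace–Runge–Lenz vector `A(r,v) = v × L − κ r/‖r‖`. -/
def lrl (κ : ℝ) (p : E3 × E3) : E3 := cross p.2 (angMom p) - (κ / ‖p.1‖) • p.1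

/-- LRL direction vector `Θ = A/‖A‖`. -/
def lrlDir (κ : ℝ) (p : E3 × E3) : E3 := ‖lrl κ p‖⁻¹ • lrl κ p

/-- Levi-Civita symbol `ε_{ijk}` on indices in `{0,1,2}`. -/
def eps (i j k : Fin 3) : ℝ :=
  (((j : ℕ) : ℝ) - ((i : ℕ) : ℝ)) * (((k : ℕ) : ℝ) - ((i : ℕ) : ℝ))
    * (((k : ℕ) : ℝ) - ((j : ℕ) : ℝ)) / 2

open scoped InnerProductSpace

theorem dot_eq_inner (a b : E3) : dot a b = ⟪a, b⟫_ℝ := by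
  simp [dot, PiLp.inner_apply, mul_comm]

theorem lrl_apply (κ : ℝ) (r v : E3) (i : Fin 3) :
    lrl κ (r, v) i = ‖v‖ ^ 2 * r i - ⟪r, v⟫_ℝ * v i - κ * ‖r‖⁻¹ * r i := by
  rw [EuclideanSpace.real_norm_sq_eq v]
  fin_cases i <;>
    simp [lrl, angMom, cross, toE3, PiLp.inner_apply, Fin.sum_univ_three] <;> ring

theorem sum_eps_angMom (r v : E3) (i j : Fin 3) :
    ∑ k, eps i j k * angMom (r, v) k = r i * v j - r j * v i := by
  fin_cases i <;> fin_cases j <;>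
    simp [eps, angMom, cross, toE3, Fin.sum_univ_three] <;> ring

theorem hasFDerivAt_coord (i : Fin 3) (x : E3) :
    HasFDerivAt (fun y : E3 => y i) (EuclideanSpace.proj i : E3 →L[ℝ] ℝ) x :=
  (EuclideanSpace.proj i : E3 →L[ℝ] ℝ).hasFDerivAt

theorem hasFDerivAt_inv_norm {r : E3} (hr : r ≠ 0) :
    HasFDerivAt (fun x : E3 => ‖x‖⁻¹) (-(‖r‖ ^ 3)⁻¹ • innerSL ℝ r) r := by
  have hn : ‖r‖ ≠ 0 := norm_ne_zero_iff.mpr hr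
  have h1 : HasFDerivAt (fun x : E3 => ‖x‖ ^ 2) (2 • innerSL ℝ r) r :=
    (hasStrictFDerivAt_norm_sq r).hasFDerivAt
  have h2 := (h1.sqrt (pow_ne_zero 2 hn))
  simp only [Real.sqrt_sq (norm_nonneg _)] at h2
  have h3 := (hasDerivAt_inv hn).comp_hasFDerivAt r h2
  refine h3.congr_fderiv ?_
  ext y
  simp
  field_simp

theorem gradR_lrl (κ : ℝ) {r : E3} (v : E3) (hr : r ≠ 0) (i : Fin 3) :
    gradR (fun p => lrl κ p i) (r, v)
      = (‖v‖ ^ 2 - κ / ‖r‖) • EuclideanSpace.single i (1 : ℝ) - v i • v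
        + (κ * r i / ‖r‖ ^ 3) • r := by
  refine HasGradientAt.gradient ?_
  rw [hasGradientAt_iff_hasFDerivAt]
  simp only [lrl_apply]
  have hi := hasFDerivAt_coord i r
  have hin : HasFDerivAt (fun x : E3 => ⟪x, v⟫_ℝ) (innerSL ℝ v) r := by
    simp only [real_inner_comm v]
    exact (innerSL ℝ v).hasFDerivAt
  refine (((hi.const_mul (‖v‖ ^ 2)).sub (hin.mul_const (v i))).sub
    (((hasFDerivAt_inv_norm hr).const_mul κ).mul hi)).congr_fderiv ?_
  ext y
  simp [EuclideanSpace.inner_single_left]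
  ring

theorem gradV_lrl (κ : ℝ) (r v : E3) (i : Fin 3) :
    gradV (fun p => lrl κ p i) (r, v)
      = (2 * r i) • v - v i • r - ⟪r, v⟫_ℝ • EuclideanSpace.single i (1 : ℝ) := by
  refine HasGradientAt.gradient ?_
  rw [hasGradientAt_iff_hasFDerivAt]
  simp only [lrl_apply]
  have hi := hasFDerivAt_coord i v
  have hin : HasFDerivAt (fun y : E3 => ⟪r, y⟫_ℝ) (innerSL ℝ r) v := (innerSL ℝ r).hasFDerivAt
  have hsq : HasFDerivAt (fun y : E3 => ‖y‖ ^ 2) (2 • innerSL ℝ v) v :=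
    (hasStrictFDerivAt_norm_sq v).hasFDerivAt
  refine (((hsq.mul_const (r i)).sub (hin.mul hi)).sub_const _).congr_fderiv ?_
  ext y
  simp [EuclideanSpace.inner_single_left]
  ring

/-- The components of the LRL vector satisfy
`{A_i, A_j}(r,v) = −2 E(r,v) Σ_k ε_{ijk} L_k(r,v)` for all `(r,v)` with `r ≠ 0`. -/
theorem poisson_lrl_lrl (κ : ℝ) (hκ : 0 < κ) (i j : Fin 3)
    (r v : E3) (hr : r ≠ 0) :
    pb (fun p => lrl κ p i) (fun p => lrl κ p j) (r, v)
      = -2 * energy κ (r, v) * ∑ k, eps i j k * angMom (r, v) k := by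
  have hn : ‖r‖ ≠ 0 := norm_ne_zero_iff.mpr hr
  rw [sum_eps_angMom, pb, dot_eq_inner, dot_eq_inner, gradR_lrl κ v hr, gradR_lrl κ v hr,
    gradV_lrl, gradV_lrl]
  -- Symmetry of `δ_{ij}`, by which the terms pairing `e_i` with `e_j` cancel.
  have hδ : (EuclideanSpace.single i (1 : ℝ) : E3) j = (EuclideanSpace.single j (1 : ℝ) : E3) i := by
    simp [eq_comm]
  simp only [inner_add_left, inner_sub_left, inner_sub_right, real_inner_smul_left,
    real_inner_smul_right, EuclideanSpace.inner_single_left, EuclideanSpace.inner_single_right,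
    real_inner_self_eq_norm_sq, real_inner_comm r v, hδ, energy, map_one, one_mul,
    conj_trivial, PiLp.add_apply, PiLp.sub_apply, PiLp.smul_apply, smul_eq_mul]
  field_simp
  ring
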